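/- arXiv:2008.04997 — 2 statements merged into one kernel-verified Lean document; each statement's English description precedes it below -/
import Mathlib

section
/- For every finite group G there exists a finite partially ordered set P with exactly 4·|G| elements, together with an action of G on P by order isomorphisms, such that the induced homomorphism G → Aut(P) is an isomorphism and the action of G on P is free (equivalently, the action has exactly 4 orbits, each of cardinality |G|). -/
/-!
Choose generators `1 = h₀, h₁, h₂, …` of `G`, none of them in the subgroup generated by its
predecessors, and let `S = {hᵢ}` and `T = {1} ∪ {hᵢ⁻¹ hᵢ₊₁}`. An injection `f : G → G` preserving
the Cayley digraphs of `S` and `T` satisfies `f (x hᵢ) = f x hᵢ`, by induction on `i`: since `f`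
preserves `S`, `f (x hᵢ) = f x hⱼ` for some `j`, by injectivity `j ≥ i`, and because `f`
preserves `T` the quotient `hᵢ₋₁⁻¹ hⱼ` lies in `T`, which by irredundance forces `j = i`. Hence `f`
is a left translation.

Both digraphs are then encoded in a four-level poset on `Fin 4 × G`: consecutive levels are joined
by the identity of `G`, levels `0 < 2` by `S`, levels `1 < 3` by `T`, and everything on level `0`
lies below everything on level `3`. The four-element chains `{(i, g) | i}` force an automorphism to
act on all levels by one and the same map `G → G`, which preserves both digraphs.
-/

section Rigidity

variable {G : Type*} [Group G]

/-- `f` is an endomorphism of the Cayley digraph of `G` with respect to `S`, in which `a` is joined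
to `b` when `a⁻¹ * b ∈ S`. -/
def IsCayleyHom (S : Set G) (f : G → G) : Prop :=
  ∀ ⦃a b : G⦄, a⁻¹ * b ∈ S → (f a)⁻¹ * f b ∈ S

theorem map_eq_map_one_mul_of_closure_eq_top {s : Set G} (hs : Subgroup.closure s = ⊤)
    {f : G → G} (hf : ∀ x, ∀ y ∈ s, f (x * y) = f x * y) (x : G) : f x = f 1 * x := by
  have hequivariant : ∀ y ∈ Subgroup.closure s, ∀ z, f (z * y) = f z * y := by
    intro y hy
    induction hy using Subgroup.closure_induction with
    | mem y hy => exact fun z => hf z y hy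
    | one => simp
    | mul a b _ _ ha hb => intro z; rw [← mul_assoc, hb, ha, mul_assoc]
    | inv a _ ha => intro z; rw [eq_mul_inv_iff_mul_eq, ← ha, inv_mul_cancel_right]
  simpa only [one_mul] using hequivariant x (hs ▸ Subgroup.mem_top x) 1

/-- The quotients `(h i)⁻¹ * h j` of consecutive members of the family `h`, together with `1`,
which is the case `i = j` of `i ⩿ j`. -/
def consecutiveQuotients {ι : Type*} [Preorder ι] (h : ι → G) : Set G :=
  {x | ∃ i j, i ⩿ j ∧ (h i)⁻¹ * h j = x}

theorem one_mem_consecutiveQuotients {ι : Type*} [Preorder ι] [Nonempty ι] (h : ι → G) :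
    1 ∈ consecutiveQuotients h := by
  inhabit ι
  exact ⟨default, default, WCovBy.rfl, inv_mul_cancel _⟩

/-- A family of group elements that starts with `1` and in which no later element lies in the
subgroup generated by the preceding ones. -/
structure IrredundantFamily {ι : Type*} [Preorder ι] [OrderBot ι] (h : ι → G) : Prop where
  map_bot : h ⊥ = 1
  notMem_closure : ∀ ⦃i j⦄, i < j → h j ∉ Subgroup.closure (h '' Set.Iio j)

namespace IrredundantFamily

variable {ι : Type*} [LinearOrder ι] [OrderBot ι] {h : ι → G}

theorem injective (hh : IrredundantFamily h) : Function.Injective h :=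
  .of_lt_imp_ne fun _ _ hij heq =>
    hh.notMem_closure hij (heq ▸ Subgroup.subset_closure (Set.mem_image_of_mem h hij))

theorem not_lt_of_inv_mul_eq (hh : IrredundantFamily h) {i j a b : ι} (hij : i < j) (hab : a < b)
    (heq : (h i)⁻¹ * h j = (h a)⁻¹ * h b) : ¬ j < b := by
  intro hjb
  have hmem : ∀ c < b, h c ∈ Subgroup.closure (h '' Set.Iio b) := fun c hc =>
    Subgroup.subset_closure (Set.mem_image_of_mem h hc)
  have hb : h b = h a * ((h i)⁻¹ * h j) := by rw [heq, mul_inv_cancel_left]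
  exact hh.notMem_closure hab <| hb ▸
    mul_mem (hmem a hab) (mul_mem (inv_mem (hmem i (hij.trans hjb))) (hmem j hjb))

theorem covBy_of_inv_mul_mem (hh : IrredundantFamily h) {i j : ι} (hij : i < j)
    (hmem : (h i)⁻¹ * h j ∈ consecutiveQuotients h) : i ⋖ j := by
  obtain ⟨a, b, hab, heq⟩ := hmem
  have hne : a ≠ b := by
    rintro rfl
    rw [inv_mul_cancel, eq_comm, inv_mul_eq_one] at heq
    exact hij.ne (hh.injective heq)
  have hlt : a < b := hab.le.lt_of_ne hne
  obtain rfl : b = j := le_antisymm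
    (not_lt.mp (hh.not_lt_of_inv_mul_eq hij hlt heq.symm))
    (not_lt.mp (hh.not_lt_of_inv_mul_eq hlt hij heq))
  obtain rfl : a = i := hh.injective (inv_injective (mul_right_cancel heq))
  exact hab.covBy_of_lt hlt

theorem map_mul_of_isCayleyHom [WellFoundedLT ι] [IsStronglyCoatomic ι] (hh : IrredundantFamily h)
    {f : G → G} (hf : Function.Injective f) (hS : IsCayleyHom (Set.range h) f)
    (hT : IsCayleyHom (consecutiveQuotients h) f) (x : G) (i : ι) : f (x * h i) = f x * h i := by
  induction i using WellFoundedLT.induction with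
  | ind i ih =>
  obtain rfl | hi := eq_bot_or_bot_lt i
  · rw [hh.map_bot, mul_one, mul_one]
  obtain ⟨k, -, hki⟩ := exists_le_covBy_of_lt hi
  obtain ⟨j, hj⟩ := hS (a := x) (b := x * h i) ⟨i, (inv_mul_cancel_left x (h i)).symm⟩
  replace hj : f (x * h i) = f x * h j := by rw [hj, mul_inv_cancel_left]
  have hij : i ≤ j := by
    by_contra! hji
    have : x * h j = x * h i := hf ((ih j hji).trans hj.symm)
    exact hji.ne (hh.injective (mul_left_cancel this))
  have hquot : (h k)⁻¹ * h j ∈ consecutiveQuotients h := by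
    have := hT (a := x * h k) (b := x * h i) ⟨k, i, hki.wcovBy, by group⟩
    rwa [ih k hki.lt, hj, mul_inv_rev, mul_assoc, inv_mul_cancel_left] at this
  have hkj : k ⋖ j := hh.covBy_of_inv_mul_mem (hki.lt.trans_le hij) hquot
  rw [hj, hkj.unique_right hki]

theorem eq_map_one_mul_of_isCayleyHom [WellFoundedLT ι] [IsStronglyCoatomic ι]
    (hh : IrredundantFamily h) (hgen : Subgroup.closure (Set.range h) = ⊤) {f : G → G}
    (hf : Function.Injective f) (hS : IsCayleyHom (Set.range h) f)
    (hT : IsCayleyHom (consecutiveQuotients h) f) (x : G) : f x = f 1 * x :=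
  map_eq_map_one_mul_of_closure_eq_top hgen
    (fun y _ ⟨i, hi⟩ => hi ▸ hh.map_mul_of_isCayleyHom hf hS hT y i) x

end IrredundantFamily

variable (G) in
theorem exists_irredundantFamily_closure_range_eq_top [Countable G] :
    ∃ (ι : Type) (_ : LinearOrder ι) (_ : OrderBot ι) (_ : WellFoundedLT ι)
      (_ : IsStronglyCoatomic ι) (h : ι → G),
      IrredundantFamily h ∧ Subgroup.closure (Set.range h) = ⊤ := by
  classical
  obtain ⟨e, he⟩ := exists_surjective_nat G
  let e' : ℕ → G := fun n => n.casesOn 1 e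
  let p : ℕ → Prop := fun n => n = 0 ∨ e' n ∉ Subgroup.closure (e' '' Set.Iio n)
  let _ : OrderBot {n // p n} := Subtype.orderBot (Or.inl rfl)
  refine ⟨{n // p n}, inferInstance, inferInstance, inferInstance, inferInstance,
    fun n => e' n, ⟨rfl, ?_⟩, ?_⟩
  · intro i j hij hmem
    have hj : (j : ℕ) ≠ 0 := (Nat.zero_le _).trans_lt (Subtype.coe_lt_coe.mpr hij) |>.ne'
    refine j.2.resolve_left hj (Subgroup.closure_mono ?_ hmem)
    rintro _ ⟨k, hk, rfl⟩
    exact ⟨k, hk, rfl⟩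
  · have hmem : ∀ n, e' n ∈ Subgroup.closure (Set.range fun n : {n // p n} => e' n) := by
      intro n
      induction n using Nat.strong_induction_on with
      | _ n ih =>
      by_cases hn : p n
      · exact Subgroup.subset_closure ⟨⟨n, hn⟩, rfl⟩
      · refine (Subgroup.closure_le _).mpr ?_ (not_not.mp (not_or.mp hn).2)
        rintro _ ⟨k, hk, rfl⟩
        exact ih k hk
    rw [Subgroup.eq_top_iff']
    intro x
    obtain ⟨n, rfl⟩ := he x
    exact hmem (n + 1)

end Rigidity

/-- Data for an order on `L × G` that is invariant under left translation by `G`: the pair `(i, a)`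
lies below `(j, b)` when `a⁻¹ * b ∈ link i j`. -/
structure Linkage (L G : Type*) [PartialOrder L] [Group G] where
  link : L → L → Set G
  link_self : ∀ i, link i i = {1}
  le_of_mem : ∀ {i j a}, a ∈ link i j → i ≤ j
  mul_mem : ∀ {i j k a b}, a ∈ link i j → b ∈ link j k → a * b ∈ link i k

namespace Linkage

variable {L G : Type*} [Group G]

/-- The poset `L × G` ordered by a linkage. It is a structure so that it does not inherit the
product order. -/
@[ext]
structure Point [PartialOrder L] (R : Linkage L G) where
  level : L
  base : G

section PartialOrder

variable [PartialOrder L] {R : Linkage L G}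

instance : PartialOrder R.Point where
  le x y := x.base⁻¹ * y.base ∈ R.link x.level y.level
  le_refl x := by simp only [R.link_self, inv_mul_cancel, Set.mem_singleton_iff]
  le_trans x y z hxy hyz := by simpa only [mul_assoc, mul_inv_cancel_left] using R.mul_mem hxy hyz
  le_antisymm := by
    rintro ⟨i, a⟩ ⟨j, b⟩ hxy hyx
    obtain rfl : i = j := le_antisymm (R.le_of_mem hxy) (R.le_of_mem hyx)
    simp only [R.link_self, Set.mem_singleton_iff, inv_mul_eq_one] at hxy
    rw [hxy]

theorem le_iff {x y : R.Point} : x ≤ y ↔ x.base⁻¹ * y.base ∈ R.link x.level y.level :=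
  Iff.rfl

theorem level_strictMono : StrictMono (Point.level : R.Point → L) := by
  rintro ⟨i, a⟩ ⟨j, b⟩ hlt
  refine (R.le_of_mem (le_iff.mp hlt.le)).lt_of_ne ?_
  rintro rfl
  have hmem := le_iff.mp hlt.le
  simp only [R.link_self, Set.mem_singleton_iff, inv_mul_eq_one] at hmem
  exact hlt.ne (by rw [hmem])

variable (R)

/-- The points of the poset as pairs. -/
def pointEquiv : R.Point ≃ L × G where
  toFun x := (x.level, x.base)
  invFun p := ⟨p.1, p.2⟩

/-- The action of `G` on the poset of a linkage by left translation. -/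
def translate : G →* (R.Point ≃o R.Point) where
  toFun g :=
    { toFun x := ⟨x.level, g * x.base⟩
      invFun x := ⟨x.level, g⁻¹ * x.base⟩
      left_inv x := by simp
      right_inv x := by simp
      map_rel_iff' := by simp [le_iff, mul_assoc] }
  map_one' := by ext <;> simp
  map_mul' a b := by ext <;> simp [mul_assoc]

variable {R}

theorem translate_apply (g : G) (x : R.Point) : R.translate g x = ⟨x.level, g * x.base⟩ :=
  rfl

theorem eq_one_of_translate_apply_eq {g : G} {x : R.Point} (h : R.translate g x = x) : g = 1 :=
  mul_eq_right.mp (congrArg Point.base h)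

variable (R) in
theorem translate_injective [Nonempty L] : Function.Injective R.translate := by
  inhabit L
  refine (injective_iff_map_eq_one _).mpr fun g hg => ?_
  exact eq_one_of_translate_apply_eq (x := ⟨default, 1⟩) (by rw [hg, RelIso.one_apply])

theorem one_mem_link [WellFoundedLT L] [IsStronglyCoatomic L]
    (hcov : ∀ ⦃i j⦄, i ⋖ j → R.link i j = {1}) ⦃i j : L⦄ (hij : i ≤ j) : 1 ∈ R.link i j := by
  induction j using WellFoundedLT.induction with
  | ind j ih =>
  obtain rfl | hij := hij.eq_or_lt
  · rw [R.link_self, Set.mem_singleton_iff]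
  obtain ⟨k, hik, hkj⟩ := exists_le_covBy_of_lt hij
  have hone : 1 ∈ R.link k j := by rw [hcov hkj, Set.mem_singleton_iff]
  simpa only [mul_one] using R.mul_mem (ih k hkj.lt hik) hone

/-- The map `G → G` induced by an automorphism on the lowest level. -/
def baseMap [OrderBot L] (φ : R.Point ≃o R.Point) (g : G) : G :=
  (φ ⟨⊥, g⟩).base

end PartialOrder

section LinearOrder

variable [LinearOrder L] [WellFoundedLT L] [WellFoundedGT L] {R : Linkage L G}

theorem level_apply (hcov : ∀ ⦃i j⦄, i ⋖ j → R.link i j = {1}) (φ : R.Point ≃o R.Point) (i : L)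
    (g : G) : (φ ⟨i, g⟩).level = i := by
  have hmono : StrictMono fun i => (⟨i, g⟩ : R.Point) := by
    refine Monotone.strictMono_of_injective (fun i j hij => ?_) fun i j h => congrArg Point.level h
    simpa only [le_iff, inv_mul_cancel] using one_mem_link hcov hij
  have hlevel := level_strictMono.comp (φ.strictMono.comp hmono)
  exact le_antisymm hlevel.apply_le hlevel.le_apply

variable [OrderBot L]

theorem apply_mk (hcov : ∀ ⦃i j⦄, i ⋖ j → R.link i j = {1}) (φ : R.Point ≃o R.Point) (i : L)
    (g : G) : φ ⟨i, g⟩ = ⟨i, baseMap φ g⟩ := by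
  refine Point.ext (level_apply hcov φ i g) ?_
  induction i using WellFoundedLT.induction with
  | ind i ih =>
  obtain rfl | hi := eq_bot_or_bot_lt i
  · rfl
  obtain ⟨k, -, hki⟩ := exists_le_covBy_of_lt hi
  have hle : φ ⟨k, g⟩ ≤ φ ⟨i, g⟩ := φ.monotone <| by
    simpa only [le_iff, inv_mul_cancel] using one_mem_link hcov hki.le
  rw [le_iff, level_apply hcov, level_apply hcov, hcov hki, Set.mem_singleton_iff,
    inv_mul_eq_one] at hle
  rw [← hle, ih k hki.lt]

theorem baseMap_injective (hcov : ∀ ⦃i j⦄, i ⋖ j → R.link i j = {1}) (φ : R.Point ≃o R.Point) :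
    Function.Injective (baseMap φ) := by
  intro a b hab
  have : φ ⟨⊥, a⟩ = φ ⟨⊥, b⟩ := by
    refine Point.ext ?_ hab
    rw [level_apply hcov, level_apply hcov]
  exact congrArg Point.base (φ.injective this)

theorem isCayleyHom_baseMap (hcov : ∀ ⦃i j⦄, i ⋖ j → R.link i j = {1})
    (φ : R.Point ≃o R.Point) (i j : L) : IsCayleyHom (R.link i j) (baseMap φ) := by
  intro a b hab
  have hle : φ ⟨i, a⟩ ≤ φ ⟨j, b⟩ := φ.monotone hab
  rwa [apply_mk hcov, apply_mk hcov] at hle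

theorem translate_surjective (hcov : ∀ ⦃i j⦄, i ⋖ j → R.link i j = {1})
    (hrigid : ∀ f : G → G, Function.Injective f → (∀ i j, IsCayleyHom (R.link i j) f) →
      ∀ x, f x = f 1 * x) :
    Function.Surjective R.translate := by
  refine fun φ => ⟨baseMap φ 1, ?_⟩
  have hbase := hrigid _ (baseMap_injective hcov φ) (isCayleyHom_baseMap hcov φ)
  refine RelIso.ext fun ⟨i, g⟩ => ?_
  rw [translate_apply, apply_mk hcov φ, ← hbase]

end LinearOrder

/-- The linkage on four levels in which `S` joins level `0` to level `2` and `T` joins level `1` to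
level `3`. -/
def fourLevel {S T : Set G} (hS : 1 ∈ S) (hT : 1 ∈ T) : Linkage (Fin 4) G where
  link := ![![{1}, {1}, S, Set.univ], ![∅, {1}, {1}, T], ![∅, ∅, {1}, {1}], ![∅, ∅, ∅, {1}]]
  link_self i := by fin_cases i <;> rfl
  le_of_mem {i j _} h := by fin_cases i <;> fin_cases j <;> first | decide | cases h
  mul_mem {i j k _ _} ha hb := by
    fin_cases i <;> fin_cases j <;> fin_cases k <;> simp_all

theorem link_fourLevel_of_covBy {S T : Set G} (hS : 1 ∈ S) (hT : 1 ∈ T) ⦃i j : Fin 4⦄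
    (hij : i ⋖ j) : (fourLevel hS hT).link i j = {1} := by
  rw [Fin.covBy_iff, Nat.covBy_iff_add_one_eq] at hij
  fin_cases i <;> fin_cases j <;> simp_all [fourLevel]

theorem translate_fourLevel_bijective {S T : Set G} (hS : 1 ∈ S) (hT : 1 ∈ T)
    (hrigid : ∀ f : G → G, Function.Injective f → IsCayleyHom S f → IsCayleyHom T f →
      ∀ x, f x = f 1 * x) :
    Function.Bijective (fourLevel hS hT).translate :=
  ⟨translate_injective _,
    translate_surjective (link_fourLevel_of_covBy hS hT) fun f hf hlink =>
      hrigid f hf (hlink 0 2) (hlink 1 3)⟩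

end Linkage

theorem exists_poset_card_four_mul_free_action_general (G : Type*) [Group G] [Countable G] :
    ∃ (P : Type) (_ : PartialOrder P) (φ : G →* (P ≃o P)),
      Nonempty (P ≃ Fin 4 × G) ∧
      Function.Bijective φ ∧
      (∀ (g : G) (x : P), φ g x = x → g = 1) := by
  let m : G ≃* Shrink.{0} G := Shrink.mulEquiv.symm
  have : Countable (Shrink.{0} G) := m.symm.injective.countable
  obtain ⟨ι, _, _, _, _, h, hh, hgen⟩ :=
    exists_irredundantFamily_closure_range_eq_top (Shrink.{0} G)
  let R := Linkage.fourLevel (Set.mem_range.mpr ⟨⊥, hh.map_bot⟩) (one_mem_consecutiveQuotients h)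
  have hR : Function.Bijective R.translate := Linkage.translate_fourLevel_bijective _ _
    fun _ hf hS hT => hh.eq_map_one_mul_of_isCayleyHom hgen hf hS hT
  exact ⟨R.Point, inferInstance, R.translate.comp m.toMonoidHom,
    ⟨R.pointEquiv.trans (.prodCongr (.refl _) m.symm.toEquiv)⟩, hR.comp m.bijective,
    fun g x hgx => (map_eq_one_iff m m.injective).mp (Linkage.eq_one_of_translate_apply_eq hgx)⟩

/-- For every finite group `G` there exists a finite partially ordered set `P` with
exactly `4 * |G|` elements, together with an action of `G` on `P` by order isomorphisms
(i.e. a group homomorphism `φ : G →* (P ≃o P)`), such that `φ` is an isomorphism onto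
the full automorphism group and the action is free. -/
theorem exists_poset_card_four_mul_free_action (G : Type*) [Group G] [Fintype G] :
    ∃ (P : Type) (_ : PartialOrder P) (_ : Fintype P) (φ : G →* (P ≃o P)),
      Fintype.card P = 4 * Fintype.card G ∧
      Function.Bijective φ ∧
      (∀ (g : G) (x : P), φ g x = x → g = 1) := by
  obtain ⟨P, _, φ, ⟨e⟩, hφ, hfree⟩ := exists_poset_card_four_mul_free_action_general G
  exact ⟨P, _, .ofEquiv _ e.symm, φ, by simp [Fintype.ofEquiv_card], hφ, hfree⟩
end

section
/- For every finite abelian group G there exists a finite partially ordered set P with exactly 3·|G| elements whose automorphism group Aut(P) is isomorphic to G. -/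
/-!
A permutation `σ` of a set `X` is encoded by a poset consisting of three copies of `X`, stacked
vertically, with each point of the top layer placed above one additional point of the bottom layer,
prescribed by `σ`. The vertical chains force an automorphism to act in the same way on all layers,
and the additional relations force that action to commute with `σ`. For translation by a generator
of a finite cyclic group `C`, whose centralizer consists of the translations, this yields a poset
on `3 * |C|` points with automorphism group `C`.

An automorphism of the ordinal sum of two finite posets preserves both summands, so automorphism
groups multiply while cardinalities add. Writing a finite abelian group as a product of nontrivial
cyclic groups of orders `nᵢ` realizes it on `3 * ∑ nᵢ ≤ 3 * ∏ nᵢ` points, and an ordinal sum with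
a finite chain supplies the missing points without adding automorphisms.
-/

/-- The poset encoding the permutation `σ`: three vertically stacked copies of `X`, with layers
`0`, `1`, `2` from bottom to top, where in addition the bottom copy of `σ x` lies below the top
copy of `x`. -/
@[ext]
structure ThreeLayerPoset {X : Type*} (σ : Equiv.Perm X) where
  layer : Fin 3
  point : X

namespace ThreeLayerPoset

variable {X : Type*} {σ : Equiv.Perm X}

instance : PartialOrder (ThreeLayerPoset σ) where
  le p q := (p.layer ≤ q.layer ∧ p.point = q.point) ∨
    (p.layer = 0 ∧ q.layer = 2 ∧ p.point = σ q.point)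
  le_refl p := .inl ⟨le_rfl, rfl⟩
  le_trans p q r := by grind
  le_antisymm p q := by grind [ThreeLayerPoset]

theorem le_def {p q : ThreeLayerPoset σ} :
    p ≤ q ↔ (p.layer ≤ q.layer ∧ p.point = q.point) ∨
      (p.layer = 0 ∧ q.layer = 2 ∧ p.point = σ q.point) :=
  Iff.rfl

theorem isMin_iff {p : ThreeLayerPoset σ} : IsMin p ↔ p.layer = 0 := by
  refine ⟨fun h ↦ ?_, fun h q hq ↦ ?_⟩
  · have := h (b := ⟨0, p.point⟩) (le_def.2 (by simp))
    grind [le_def]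
  · grind [le_def]

theorem isMax_iff {p : ThreeLayerPoset σ} : IsMax p ↔ p.layer = 2 := by
  refine ⟨fun h ↦ ?_, fun h q hq ↦ ?_⟩
  · have := h (b := ⟨2, p.point⟩) (le_def.2 (by grind))
    grind [le_def]
  · grind [le_def]

theorem layer_apply (f : ThreeLayerPoset σ ≃o ThreeLayerPoset σ) (p : ThreeLayerPoset σ) :
    (f p).layer = p.layer := by
  have hmin := f.isMin_apply (x := p)
  have hmax := f.isMax_apply (x := p)
  rw [isMin_iff, isMin_iff] at hmin
  rw [isMax_iff, isMax_iff] at hmax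
  omega

theorem point_apply (f : ThreeLayerPoset σ ≃o ThreeLayerPoset σ) (p : ThreeLayerPoset σ) :
    (f p).point = (f ⟨1, p.point⟩).point := by
  have hcomp : p ≤ ⟨1, p.point⟩ ∨ ⟨1, p.point⟩ ≤ p := by
    rcases le_total p.layer 1 with h | h
    · exact .inl (.inl ⟨h, rfl⟩)
    · exact .inr (.inl ⟨h, rfl⟩)
  rw [← f.le_iff_le, ← f.le_iff_le (x := ⟨1, p.point⟩), le_def, le_def] at hcomp
  have hlayer := layer_apply f ⟨1, p.point⟩
  grind

/-- The permutation of `X` by which an automorphism acts on each of the three layers. -/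
def pointPerm (f : ThreeLayerPoset σ ≃o ThreeLayerPoset σ) : Equiv.Perm X where
  toFun x := (f ⟨1, x⟩).point
  invFun x := (f.symm ⟨1, x⟩).point
  left_inv x := by simpa using (point_apply f.symm (f ⟨1, x⟩)).symm
  right_inv x := by simpa using (point_apply f (f.symm ⟨1, x⟩)).symm

theorem apply_eq (f : ThreeLayerPoset σ ≃o ThreeLayerPoset σ) (p : ThreeLayerPoset σ) :
    f p = ⟨p.layer, pointPerm f p.point⟩ :=
  ThreeLayerPoset.ext (layer_apply f p) (point_apply f p)

theorem pointPerm_mem_centralizer (f : ThreeLayerPoset σ ≃o ThreeLayerPoset σ) :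
    pointPerm f ∈ Subgroup.centralizer {σ} := by
  set t := pointPerm f
  have hrel (x y : X) : t x = t y ∨ t x = σ (t y) ↔ x = y ∨ x = σ y := by
    have := f.le_iff_le (x := ⟨0, x⟩) (y := ⟨2, y⟩)
    simpa [apply_eq, le_def] using this
  rw [Subgroup.mem_centralizer_singleton_iff]
  ext x
  change t (σ x) = σ (t x)
  rcases (hrel (σ x) x).2 (.inr rfl) with hfix | hcomm
  · -- `x` is fixed by `σ`, and then so is `t x`.
    have hσx : σ x = x := t.injective hfix
    have := (hrel (t.symm (σ (t x))) x).1 (by simp)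
    rw [hσx, or_self, t.symm_apply_eq] at this
    rw [hfix, this]
  · exact hcomm

/-- The automorphism acting on every layer by a permutation that commutes with `σ`. -/
def mapPoint (t : Subgroup.centralizer {σ}) : ThreeLayerPoset σ ≃o ThreeLayerPoset σ where
  toFun p := ⟨p.layer, t.1 p.point⟩
  invFun p := ⟨p.layer, t.1.symm p.point⟩
  left_inv p := by simp
  right_inv p := by simp
  map_rel_iff' {p q} := by
    have hcomm : σ (t.1 q.point) = t.1 (σ q.point) :=
      (Equiv.Perm.congr_fun (Subgroup.mem_centralizer_singleton_iff.1 t.2) q.point).symm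
    simp [le_def, hcomm]

variable (σ) in
/-- The automorphism group of the three-layer poset of `σ` is the centralizer of `σ`. -/
def centralizerEquiv :
    Subgroup.centralizer {σ} ≃* (ThreeLayerPoset σ ≃o ThreeLayerPoset σ) where
  toFun := mapPoint
  invFun f := ⟨pointPerm f, pointPerm_mem_centralizer f⟩
  left_inv _ := rfl
  right_inv f := DFunLike.ext _ _ fun p ↦ (apply_eq f p).symm
  map_mul' _ _ := rfl

variable (σ) in
/-- The underlying type of a three-layer poset, as a product. -/
def equivProd : ThreeLayerPoset σ ≃ Fin 3 × X where
  toFun p := (p.layer, p.point)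
  invFun p := ⟨p.1, p.2⟩

instance [Fintype X] : Fintype (ThreeLayerPoset σ) :=
  Fintype.ofEquiv _ (equivProd σ).symm

theorem card [Fintype X] : Fintype.card (ThreeLayerPoset σ) = 3 * Fintype.card X := by
  simp [Fintype.card_congr (equivProd σ)]

end ThreeLayerPoset

theorem centralizer_mulLeft_eq_range_toPermHom {C : Type*} [CommGroup C] {g : C}
    (hg : ∀ x, x ∈ Subgroup.zpowers g) :
    Subgroup.centralizer {Equiv.mulLeft g} = (MulAction.toPermHom C C).range := by
  ext t
  rw [Subgroup.mem_centralizer_singleton_iff, MonoidHom.mem_range]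
  refine ⟨fun ht ↦ ⟨t 1, ?_⟩, ?_⟩
  · ext x
    obtain ⟨k, rfl⟩ := hg x
    have hcomm : Commute t (MulAction.toPermHom C C (g ^ k)) := by
      rw [map_zpow]
      exact Commute.zpow_right ht k
    simpa [mul_comm] using (Equiv.Perm.congr_fun hcomm.eq 1).symm
  · rintro ⟨a, rfl⟩
    ext x
    simp [mul_left_comm]

/-- A cyclic group is the centralizer of translation by a generator. -/
noncomputable def centralizerMulLeftEquiv {C : Type*} [CommGroup C] {g : C}
    (hg : ∀ x, x ∈ Subgroup.zpowers g) : C ≃* Subgroup.centralizer {Equiv.mulLeft g} :=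
  (MonoidHom.ofInjective (f := MulAction.toPermHom C C) MulAction.toPerm_injective).trans
    (MulEquiv.subgroupCongr (centralizer_mulLeft_eq_range_toPermHom hg).symm)

section SumLex

variable (P Q : Type*) [LE P] [LE Q]

/-- A pair of automorphisms acts on the ordinal sum summand by summand. -/
def sumLexCongrHom : (P ≃o P) × (Q ≃o Q) →* (P ⊕ₗ Q ≃o P ⊕ₗ Q) where
  toFun e := e.1.sumLexCongr e.2
  map_one' := OrderIso.sumLexCongr_refl
  map_mul' a b := (OrderIso.sumLexCongr_trans b.1 b.2 a.1 a.2).symm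

theorem sumLexCongrHom_injective : Function.Injective (sumLexCongrHom P Q) := by
  intro a b h
  ext x
  · exact Sum.inl_injective (congrArg ofLex (DFunLike.congr_fun h (toLex (.inl x))))
  · exact Sum.inr_injective (congrArg ofLex (DFunLike.congr_fun h (toLex (.inr x))))

variable {P Q}

theorem mapsTo_range_inl_of_sumLex [Finite P] [Finite Q] (f : P ⊕ₗ Q ≃o P ⊕ₗ Q) :
    Set.MapsTo (toLex.trans (f.toEquiv.trans ofLex)) (Set.range (Sum.inl : P → P ⊕ Q))
      (Set.range Sum.inl) := by
  rintro _ ⟨p, rfl⟩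
  by_contra hp
  refine hp (((Equiv.Perm.perm_mapsTo_inl_iff_mapsTo_inr _).2 ?_) ⟨p, rfl⟩)
  -- `f p` lies in `Q`, hence so does everything above it, in particular the image of `Q`.
  rintro _ ⟨q, rfl⟩
  have hle : f (toLex (.inl p)) ≤ f (toLex (.inr q)) := f.le_iff_le.2 (Sum.Lex.inl_le_inr p q)
  rw [Sum.Lex.le_def] at hle
  change ofLex (f (toLex (.inl p))) ∉ _ at hp
  change ofLex (f (toLex (.inr q))) ∈ _
  generalize ofLex (f (toLex (.inl p))) = x, ofLex (f (toLex (.inr q))) = y at *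
  cases hle <;> simp_all

theorem sumLexCongrHom_surjective [Finite P] [Finite Q] :
    Function.Surjective (sumLexCongrHom P Q) := by
  intro f
  obtain ⟨⟨a, b⟩, hab⟩ :=
    Equiv.Perm.mem_sumCongrHom_range_of_perm_mapsTo_inl (mapsTo_range_inl_of_sumLex f)
  have hf (x : P ⊕ Q) : f (toLex x) = toLex (Sum.map a b x) :=
    congrArg toLex (Equiv.congr_fun hab x).symm
  refine ⟨(⟨a, fun {x y} ↦ ?_⟩, ⟨b, fun {x y} ↦ ?_⟩), ?_⟩
  · simpa [hf] using f.le_iff_le (x := toLex (.inl x)) (y := toLex (.inl y))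
  · simpa [hf] using f.le_iff_le (x := toLex (.inr x)) (y := toLex (.inr y))
  · exact DFunLike.ext _ _ fun x ↦ (hf (ofLex x)).symm

variable (P Q) in
/-- The automorphism group of the ordinal sum of two finite orders is the product of their
automorphism groups. -/
noncomputable def sumLexCongrEquiv [Finite P] [Finite Q] :
    (P ≃o P) × (Q ≃o Q) ≃* (P ⊕ₗ Q ≃o P ⊕ₗ Q) :=
  MulEquiv.ofBijective (sumLexCongrHom P Q)
    ⟨sumLexCongrHom_injective P Q, sumLexCongrHom_surjective⟩

end SumLex

/-- `G` is isomorphic to the automorphism group of a poset with exactly `m` elements.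
Taking the poset in `Type` is no restriction, as it is finite. -/
def IsPosetAut (G : Type*) [Group G] (m : ℕ) : Prop :=
  ∃ (P : Type) (_ : PartialOrder P) (_ : Fintype P),
    Fintype.card P = m ∧ Nonempty ((P ≃o P) ≃* G)

namespace IsPosetAut

variable {G H : Type*} [Group G] [Group H] {m k : ℕ}

theorem congr (hG : IsPosetAut G m) (e : G ≃* H) : IsPosetAut H m := by
  obtain ⟨P, _, _, hP, ⟨f⟩⟩ := hG
  exact ⟨P, _, _, hP, ⟨f.trans e⟩⟩

theorem of_unique [Unique G] (m : ℕ) : IsPosetAut G m :=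
  have : Unique (Fin m ≃o Fin m) := .mk' _
  ⟨Fin m, _, _, Fintype.card_fin m, ⟨.ofUnique⟩⟩

theorem of_isCyclic (C : Type) [CommGroup C] [IsCyclic C] [Fintype C] :
    IsPosetAut C (3 * Fintype.card C) := by
  obtain ⟨g, hg⟩ := IsCyclic.exists_generator (α := C)
  exact ⟨ThreeLayerPoset (Equiv.mulLeft g), _, _, ThreeLayerPoset.card,
    ⟨((centralizerMulLeftEquiv hg).trans (ThreeLayerPoset.centralizerEquiv _)).symm⟩⟩

theorem prod (hG : IsPosetAut G m) (hH : IsPosetAut H k) : IsPosetAut (G × H) (m + k) := by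
  obtain ⟨P, _, _, rfl, ⟨f⟩⟩ := hG
  obtain ⟨Q, _, _, rfl, ⟨g⟩⟩ := hH
  exact ⟨P ⊕ₗ Q, inferInstance, inferInstance, by simp [Fintype.card_lex],
    ⟨(sumLexCongrEquiv P Q).symm.trans (f.prodCongr g)⟩⟩

theorem mono (hG : IsPosetAut G m) (hmk : m ≤ k) : IsPosetAut G k := by
  obtain ⟨d, rfl⟩ := Nat.exists_eq_add_of_le hmk
  exact (hG.prod (of_unique (G := Unit) d)).congr .prodUnique

theorem pi {ι : Type*} [inst : Fintype ι] (A : ι → Type*) [∀ i, Group (A i)] {c : ι → ℕ}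
    (hA : ∀ i, IsPosetAut (A i) (c i)) : IsPosetAut (∀ i, A i) (∑ i, c i) := by
  revert A c
  refine Fintype.induction_empty_option ?_ ?_ ?_ ι (h_fintype := inst)
  · intro α β _ e ih A _ c hA
    have e' : (∀ b, A b) ≃* ∀ a, A (e a) :=
      { Equiv.piCongrLeft' A e.symm with map_mul' := fun _ _ ↦ rfl }
    let := Fintype.ofEquiv β e.symm
    rw [← e.sum_comp]
    exact (ih _ fun a ↦ hA (e a)).congr e'.symm
  · intro A _ c _
    exact of_unique _
  · intro α _ ih A _ c hA
    have e : (∀ a, A a) ≃* A none × ∀ a, A (some a) :=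
      { Equiv.piOptionEquivProd with map_mul' := fun _ _ ↦ rfl }
    rw [Fintype.sum_option]
    exact ((hA none).prod (ih _ fun a ↦ hA (some a))).congr e.symm

end IsPosetAut

theorem sum_le_prod_of_two_le {ι R : Type*} [CommSemiring R] [LinearOrder R]
    [IsStrictOrderedRing R] {s : Finset ι} {f : ι → R} (hf : ∀ i ∈ s, 2 ≤ f i) :
    ∑ i ∈ s, f i ≤ ∏ i ∈ s, f i := by
  induction s using Finset.cons_induction with
  | empty => simp
  | cons a s ha ih =>
    have hs (i) (hi : i ∈ s) : 2 ≤ f i := hf i (Finset.mem_cons_of_mem hi)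
    rcases s.eq_empty_or_nonempty with rfl | ⟨b, hb⟩
    · simp
    have hprod : 2 ≤ ∏ i ∈ s, f i :=
      calc 2 ≤ f b := hs b hb
        _ ≤ ∑ i ∈ s, f i :=
          Finset.single_le_sum (fun i hi ↦ zero_le_two.trans (hs i hi)) hb
        _ ≤ ∏ i ∈ s, f i := ih hs
    rw [Finset.sum_cons, Finset.prod_cons]
    calc f a + ∑ i ∈ s, f i ≤ f a + ∏ i ∈ s, f i := by gcongr; exact ih hs
      _ ≤ f a * ∏ i ∈ s, f i := add_le_mul (hf a (Finset.mem_cons_self a s)) hprod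

/-- For every finite abelian group `G` there exists a finite partially ordered set `P`
with exactly `3 * |G|` elements whose automorphism group is isomorphic to `G`. -/
theorem exists_poset_card_three_mul_aut_iso_of_comm (G : Type*) [CommGroup G] [Fintype G] :
    ∃ (P : Type) (_ : PartialOrder P) (_ : Fintype P),
      Fintype.card P = 3 * Fintype.card G ∧ Nonempty ((P ≃o P) ≃* G) := by
  obtain ⟨ι, _, n, hn, ⟨e⟩⟩ := CommGroup.equiv_prod_multiplicative_zmod_of_finite G
  have (i : ι) : NeZero (n i) := ⟨(zero_lt_one.trans (hn i)).ne'⟩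
  have hpi := IsPosetAut.pi _ fun i ↦ IsPosetAut.of_isCyclic (Multiplicative (ZMod (n i)))
  have hcard : Fintype.card G = ∏ i, n i := by
    classical simp [Fintype.card_congr e.toEquiv, ZMod.card]
  refine (hpi.congr e.symm).mono ?_
  calc ∑ i, 3 * Fintype.card (Multiplicative (ZMod (n i))) = 3 * ∑ i, n i := by
        simp [Finset.mul_sum, ZMod.card]
    _ ≤ 3 * ∏ i, n i := by gcongr; exact sum_le_prod_of_two_le fun i _ ↦ hn i
    _ = 3 * Fintype.card G := by rw [hcard]
end
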